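/- Let m, n be positive integers and a, b, c integers. For i ∈ (ℤ/mℤ) × (ℤ/nℤ) write i₁ ∈ {0,…,m−1} and i₂ ∈ {0,…,n−1} for the canonical integer representatives of its two components. Define ω(i,j,k) := exp(2πi·(a·i₁·⌊(j₁+k₁)/m⌋)/m) · exp(2πi·(b·i₂·⌊(j₁+k₁)/m⌋ + c·i₂·⌊(j₂+k₂)/n⌋)/n) ∈ U(1), and for z, w ∈ U(1) define μ(i,j)(z,w) := (exp(2πi/m)·z)^{a·⌊(i₁+j₁)/m⌋} · (exp(2πi/n)·w)^{b·⌊(i₁+j₁)/m⌋ + c·⌊(i₂+j₂)/n⌋} ∈ U(1), where the sums i₁+j₁ and i₂+j₂ are taken in ℤ (not reduced modulo m or n) and the exponents are integer powers. Then for all i, j, k ∈ (ℤ/mℤ) × (ℤ/nℤ) and all z, w ∈ U(1): ω(i,j,k) · μ(i+j,k)(z,w) · μ(i,j)(z,w) = μ(i,j+k)(z,w) · μ(j,k)( exp(2πi·i₁/m)·z , exp(2πi·i₂/n)·w ). -/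

import Mathlib

open scoped Real

/-!
The carry cocycle of `ℤ/mℤ` is, up to the factor `m`, the coboundary of the map sending a residue
to its integer representative. Hence the exponents `a·⌊(i₁+j₁)/m⌋` and
`b·⌊(i₁+j₁)/m⌋ + c·⌊(i₂+j₂)/n⌋` are integral 2-cocycles, and `μ` would be a 2-cocycle if the group
did not move the torus. Rotating the coordinates by `exp(2πi·i₁/m)` and `exp(2πi·i₂/n)` multiplies
`μ(j,k)` by the powers of these rotations with exponents given by the 2-cocycles at `(j,k)`, and the
product of these powers is `ω(i,j,k)`.
-/

/-- The carry cocycle `⌊(x + y)/m⌋` of the extension `ℤ → ℤ → ℤ/mℤ`, the sum being that of the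
canonical representatives. It is written with `Int.fdiv` so as to agree definitionally with the
exponents in `torus_trivialization`. -/
def zmodCarry {m : ℕ} (x y : ZMod m) : ℤ :=
  ((x.val : ℤ) + (y.val : ℤ)).fdiv m

theorem val_add_add_mul_zmodCarry {m : ℕ} [NeZero m] (x y : ZMod m) :
    ((x + y).val : ℤ) + m * zmodCarry x y = x.val + y.val := by
  rw [zmodCarry, Int.fdiv_eq_ediv_of_nonneg _ (Int.natCast_nonneg m), ZMod.val_add]
  push_cast
  exact Int.emod_add_mul_ediv _ _

theorem zmodCarry_add_left_add_zmodCarry {m : ℕ} [NeZero m] (x y z : ZMod m) :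
    zmodCarry (x + y) z + zmodCarry x y = zmodCarry x (y + z) + zmodCarry y z := by
  have hm : (m : ℤ) ≠ 0 := NeZero.ne _
  have h_left := val_add_add_mul_zmodCarry (x + y) z
  have h_right := val_add_add_mul_zmodCarry x (y + z)
  rw [← add_assoc] at h_right
  apply mul_left_cancel₀ hm
  linear_combination h_left + val_add_add_mul_zmodCarry x y - h_right -
    val_add_add_mul_zmodCarry y z

/-- The integral 2-cocycle `b·⌊(i₁ + j₁)/m⌋ + c·⌊(i₂ + j₂)/n⌋` of `ℤ/mℤ × ℤ/nℤ`, the exponent of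
the second coordinate of the torus in `μ`. -/
def prodCarry {m n : ℕ} (b c : ℤ) (i j : ZMod m × ZMod n) : ℤ :=
  b * zmodCarry i.1 j.1 + c * zmodCarry i.2 j.2

theorem prodCarry_add_left_add_prodCarry {m n : ℕ} [NeZero m] [NeZero n] (b c : ℤ)
    (i j k : ZMod m × ZMod n) :
    prodCarry b c (i + j) k + prodCarry b c i j =
      prodCarry b c i (j + k) + prodCarry b c j k := by
  simp only [prodCarry, Prod.fst_add, Prod.snd_add]
  linear_combination b * zmodCarry_add_left_add_zmodCarry i.1 j.1 k.1 +
    c * zmodCarry_add_left_add_zmodCarry i.2 j.2 k.2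

theorem zpow_mul_zpow_mul_zpow_of_add_eq_add {G : Type*} [CommGroup G] (g x : G) {p q r s : ℤ}
    (h : p + q = r + s) : g ^ s * x ^ p * x ^ q = x ^ r * (g * x) ^ s := by
  rw [mul_assoc, ← zpow_add, h, zpow_add, mul_zpow, mul_left_comm]

/-- Proposition 4.5 of the paper.  The explicit functions `μ` trivialize the
pullback of the explicit 3-cocycle `ω = ω_{a,b,c}` on `(ℤ/mℤ) × (ℤ/nℤ)` over the rotation
action on the 2-torus.  Here `i₁, i₂` denote the canonical integer representatives of the two
components (sums of representatives being taken in `ℤ`, not reduced), and `Int.fdiv` is floor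
division, so `Int.fdiv x m = ⌊x/m⌋`. -/
theorem torus_trivialization
    (m n : ℕ) (hm : 0 < m) (hn : 0 < n) (a b c : ℤ)
    (ω : ZMod m × ZMod n → ZMod m × ZMod n → ZMod m × ZMod n → Circle)
    (hω : ∀ i j k : ZMod m × ZMod n,
      ω i j k =
        Circle.exp (2 * π *
            ((a * (i.1.val : ℤ) * (((j.1.val : ℤ) + (k.1.val : ℤ)).fdiv m) : ℤ) : ℝ) / m) *
        Circle.exp (2 * π *
            ((b * (i.2.val : ℤ) * (((j.1.val : ℤ) + (k.1.val : ℤ)).fdiv m)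
              + c * (i.2.val : ℤ) * (((j.2.val : ℤ) + (k.2.val : ℤ)).fdiv n) : ℤ) : ℝ) / n))
    (μ : ZMod m × ZMod n → ZMod m × ZMod n → Circle → Circle → Circle)
    (hμ : ∀ (i j : ZMod m × ZMod n) (z w : Circle),
      μ i j z w =
        (Circle.exp (2 * π / m) * z) ^ (a * (((i.1.val : ℤ) + (j.1.val : ℤ)).fdiv m)) *
        (Circle.exp (2 * π / n) * w) ^
          (b * (((i.1.val : ℤ) + (j.1.val : ℤ)).fdiv m)
            + c * (((i.2.val : ℤ) + (j.2.val : ℤ)).fdiv n))) :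
    ∀ (i j k : ZMod m × ZMod n) (z w : Circle),
      ω i j k * μ (i + j) k z w * μ i j z w
        = μ i (j + k) z w *
          μ j k (Circle.exp (2 * π * (i.1.val : ℝ) / m) * z)
                (Circle.exp (2 * π * (i.2.val : ℝ) / n) * w) := by
  intro i j k z w
  have : NeZero m := ⟨hm.ne'⟩
  have : NeZero n := ⟨hn.ne'⟩
  let e (i j : ZMod m × ZMod n) : ℤ := a * zmodCarry i.1 j.1
  let f := prodCarry (m := m) (n := n) b c
  let X := Circle.exp (2 * π * (i.1.val : ℝ) / m)
  let Y := Circle.exp (2 * π * (i.2.val : ℝ) / n)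
  let P := Circle.exp (2 * π / m) * z
  let Q := Circle.exp (2 * π / n) * w
  have he : e (i + j) k + e i j = e i (j + k) + e j k := by
    linear_combination a * zmodCarry_add_left_add_zmodCarry i.1 j.1 k.1
  have hω' : ω i j k = X ^ e j k * Y ^ f j k := by
    rw [hω, ← Circle.exp_intCast_mul, ← Circle.exp_intCast_mul]
    congr 2 <;> simp only [e, f, prodCarry, zmodCarry] <;> push_cast <;> ring
  have hμ' (i j) : μ i j z w = P ^ e i j * Q ^ f i j := hμ i j z w
  have hμ_rot : μ j k (X * z) (Y * w) = (X * P) ^ e j k * (Y * Q) ^ f j k := by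
    rw [mul_left_comm X, mul_left_comm Y]
    exact hμ j k (X * z) (Y * w)
  calc
    _ = X ^ e j k * P ^ e (i + j) k * P ^ e i j * (Y ^ f j k * Q ^ f (i + j) k * Q ^ f i j) := by
      rw [hω', hμ', hμ', mul_mul_mul_comm (X ^ _), mul_mul_mul_comm (X ^ _ * _)]
    _ = P ^ e i (j + k) * (X * P) ^ e j k * (Q ^ f i (j + k) * (Y * Q) ^ f j k) := by
      rw [zpow_mul_zpow_mul_zpow_of_add_eq_add X P he, zpow_mul_zpow_mul_zpow_of_add_eq_add Y Q
        (prodCarry_add_left_add_prodCarry b c i j k)]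
    _ = μ i (j + k) z w * μ j k (X * z) (Y * w) := by rw [hμ', hμ_rot, mul_mul_mul_comm]
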